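/- arXiv:1310.2858 — 6 statements merged into one kernel-verified Lean document; each statement's English description precedes it below -/
import Mathlib

section
/- For every k-cd c̄ for n nodes with n ≥ 1, it holds that 0 ≤ γ(c̄) ≤ 1/8. -/
open Finset

/-- The color appearing at least twice among `x, y, z`, or `x` if all three are distinct. -/
def maj3 {k : ℕ} (x y z : Fin k) : Fin k := if y = z then y else x

/-- Number of nodes with color `j` in the assignment `a`. -/
def cnt {n k : ℕ} (a : Fin n → Fin k) (j : Fin k) : ℕ :=
  (Finset.univ.filter (fun i => a i = j)).card

/-- One sample for a round of the 3-majority dynamics: each node picks three nodes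
(uniformly at random, with replacement). -/
abbrev Sample (n : ℕ) := Fin n → Fin n × Fin n × Fin n

/-- The assignment obtained from `a` after one step of the 3-majority dynamics with samples `S`. -/
def stepA {n k : ℕ} (a : Fin n → Fin k) (S : Sample n) : Fin n → Fin k :=
  fun i => maj3 (a (S i).1) (a (S i).2.1) (a (S i).2.2)

/-- Probability that the event `E` holds for the configuration obtained from `a`
after one step of the 3-majority dynamics (samples are uniform and independent). -/
noncomputable def stepPr {n k : ℕ} (a : Fin n → Fin k) (E : (Fin n → Fin k) → Prop) : ℝ :=
  (Nat.card {S : Sample n // E (stepA a S)} : ℝ) / (Nat.card (Sample n) : ℝ)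

/-- Expectation of `f` of the configuration obtained from `a` after one step of the
3-majority dynamics. -/
noncomputable def stepE {n k : ℕ} (a : Fin n → Fin k) (f : (Fin n → Fin k) → ℝ) : ℝ :=
  (∑ S : Sample n, f (stepA a S)) / (Nat.card (Sample n) : ℝ)

/-- `m(c̄)`: the size of the largest color class. -/
def mval {k : ℕ} (c : Fin k → ℕ) : ℕ := Finset.univ.sup c

/-- `M(c̄)`: the set of colors attaining the maximum. -/
def Mset {k : ℕ} (c : Fin k → ℕ) : Finset (Fin k) :=
  Finset.univ.filter (fun j => c j = mval c)

/-- `s(c̄)`: the bias, i.e. the gap between the (unique) maximum and the second largest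
color class; `0` if the maximum is not unique. -/
def sval {k : ℕ} (c : Fin k → ℕ) : ℕ :=
  if (Mset c).card = 1 then mval c - (Finset.univ \ Mset c).sup c else 0

/-- `α(c̄) = (n − m(c̄))·s(c̄)/n²`. -/
noncomputable def alphaV (n : ℕ) {k : ℕ} (c : Fin k → ℕ) : ℝ :=
  ((n : ℝ) - mval c) * sval c / (n : ℝ) ^ 2

/-- `γ(c̄) = (n·m(c̄) − Σ_h c_h²)/n² − α(c̄)`. -/
noncomputable def gammaV (n : ℕ) {k : ℕ} (c : Fin k → ℕ) : ℝ :=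
  ((n : ℝ) * mval c - ∑ h, (c h : ℝ) ^ 2) / (n : ℝ) ^ 2 - alphaV n c

/-- The trajectory of the 3-majority dynamics started at `a`, driven by the samples `S`
for the first `N` rounds. -/
def trajA {n k N : ℕ} (a : Fin n → Fin k) (S : Fin N → Sample n) : ℕ → Fin n → Fin k
  | 0 => a
  | t + 1 => if h : t < N then stepA (trajA a S t) (S ⟨t, h⟩) else trajA a S t

/-- Probability of an event `E` for an `N`-round run of the 3-majority dynamics
(all samples of all rounds are uniform and independent). -/
noncomputable def runPr {n k : ℕ} (N : ℕ) (a : Fin n → Fin k)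
    (E : (Fin N → Sample n) → Prop) : ℝ :=
  (Nat.card {S : Fin N → Sample n // E S} : ℝ) / (Nat.card (Fin N → Sample n) : ℝ)

/-!
Let `j` be a color of maximal size and `b` the largest size of the other classes. The bias is then
`m(c̄) - b`, also when the maximum is not unique, and substituting it gives
`n² γ(c̄) = ∑_{h ≠ j} c_h (b - c_h)`. Every summand is nonnegative, and a class attaining `b`
contributes `0`, so the sum is at most `b (n - m(c̄) - b) ≤ b (n - 2b) ≤ n² / 8`.
-/

theorem sum_mul_sup_sub_nonneg {ι R : Type*} [CommRing R] [PartialOrder R] [IsOrderedRing R]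
    (s : Finset ι) (f : ι → ℕ) : 0 ≤ ∑ i ∈ s, (f i : R) * ((s.sup f : ℕ) - f i) :=
  sum_nonneg fun _ hi =>
    mul_nonneg (Nat.cast_nonneg _) (sub_nonneg.2 (Nat.mono_cast (le_sup hi)))

theorem sum_mul_sup_sub_le {ι R : Type*} [CommRing R] [PartialOrder R] [IsOrderedRing R]
    (s : Finset ι) (f : ι → ℕ) :
    ∑ i ∈ s, (f i : R) * ((s.sup f : ℕ) - f i) ≤
      (s.sup f : ℕ) * (∑ i ∈ s, (f i : R) - (s.sup f : ℕ)) := by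
  have sq_sup_le : ((s.sup f : ℕ) : R) ^ 2 ≤ ∑ i ∈ s, (f i : R) ^ 2 := by
    obtain rfl | hs := s.eq_empty_or_nonempty
    · simp
    · obtain ⟨i, hi, hsup⟩ := exists_mem_eq_sup s hs f
      rw [hsup]
      exact single_le_sum (f := fun i => (f i : R) ^ 2)
        (fun _ _ => pow_nonneg (Nat.cast_nonneg _) 2) hi
  calc ∑ i ∈ s, (f i : R) * ((s.sup f : ℕ) - f i)
      = (s.sup f : ℕ) * ∑ i ∈ s, (f i : R) - ∑ i ∈ s, (f i : R) ^ 2 := by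
        rw [mul_sum, ← sum_sub_distrib]
        exact sum_congr rfl fun _ _ => by ring
    _ ≤ (s.sup f : ℕ) * ∑ i ∈ s, (f i : R) - ((s.sup f : ℕ) : R) ^ 2 :=
        sub_le_sub_left sq_sup_le _
    _ = (s.sup f : ℕ) * (∑ i ∈ s, (f i : R) - (s.sup f : ℕ)) := by ring

section ColoringDistribution

variable {k : ℕ} {c : Fin k → ℕ} {j : Fin k}

theorem mem_Mset : j ∈ Mset c ↔ c j = mval c := by
  simp [Mset]

theorem Mset_nonempty [Nonempty (Fin k)] (c : Fin k → ℕ) : (Mset c).Nonempty := by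
  obtain ⟨j, -, hj⟩ := exists_mem_eq_sup univ univ_nonempty c
  exact ⟨j, mem_Mset.2 hj.symm⟩

theorem sup_erase_le_mval (c : Fin k → ℕ) (j : Fin k) : (univ.erase j).sup c ≤ mval c :=
  sup_mono (erase_subset j univ)

theorem sval_eq_mval_sub_sup_erase (hj : j ∈ Mset c) :
    sval c = mval c - (univ.erase j).sup c := by
  unfold sval
  split_ifs with hcard
  · obtain ⟨i, hi⟩ := card_eq_one.1 hcard
    obtain rfl : j = i := mem_singleton.1 (hi ▸ hj)
    rw [hi, sdiff_singleton_eq_erase]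
  · have one_lt_card : 1 < (Mset c).card := by
      have := card_pos.2 ⟨j, hj⟩
      omega
    obtain ⟨i, hi, hij⟩ := exists_mem_ne one_lt_card j
    have mval_le : mval c ≤ (univ.erase j).sup c :=
      mem_Mset.1 hi ▸ le_sup (mem_erase.2 ⟨hij, mem_univ i⟩)
    exact (Nat.sub_eq_zero_of_le mval_le).symm

theorem gammaV_eq_sum_erase {n : ℕ} (hc : ∑ h, c h = n) (hj : j ∈ Mset c) :
    gammaV n c =
      (∑ h ∈ univ.erase j, (c h : ℝ) * (((univ.erase j).sup c : ℕ) - c h)) / (n : ℝ) ^ 2 := by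
  have n_eq : (n : ℝ) = mval c + ∑ h ∈ univ.erase j, (c h : ℝ) := by
    rw [← hc, ← add_sum_erase _ _ (mem_univ j), mem_Mset.1 hj]
    push_cast
    rfl
  have sum_sq_eq : ∑ h, (c h : ℝ) ^ 2 = (mval c : ℝ) ^ 2 + ∑ h ∈ univ.erase j, (c h : ℝ) ^ 2 := by
    rw [← add_sum_erase _ _ (mem_univ j), mem_Mset.1 hj]
  rw [gammaV, alphaV, ← sub_div, sval_eq_mval_sub_sup_erase hj,
    Nat.cast_sub (sup_erase_le_mval c j), sum_sq_eq]
  congr 1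
  simp only [mul_sub, sum_sub_distrib, ← sum_mul, ← sq]
  linear_combination (((univ.erase j).sup c : ℕ) : ℝ) * n_eq

end ColoringDistribution

/-- Lemma (alpha-gamma), part (c): `0 ≤ γ(c̄) ≤ 1/8`. -/
theorem gammaV_nonneg_le (n k : ℕ) (hn : 1 ≤ n) (c : Fin k → ℕ) (hc : ∑ h, c h = n) :
    0 ≤ gammaV n c ∧ gammaV n c ≤ 1 / 8 := by
  obtain ⟨i, -, -⟩ := exists_ne_zero_of_sum_ne_zero (show ∑ h, c h ≠ 0 by omega)
  have : Nonempty (Fin k) := ⟨i⟩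
  obtain ⟨j, hj⟩ := Mset_nonempty c
  rw [gammaV_eq_sum_erase hc hj]
  refine ⟨div_nonneg (sum_mul_sup_sub_nonneg _ c) (sq_nonneg _), ?_⟩
  set b := (univ.erase j).sup c
  have hb : (b : ℝ) ≤ c j := by
    exact_mod_cast (sup_erase_le_mval c j).trans_eq (mem_Mset.1 hj).symm
  have hsum : (c j : ℝ) + ∑ h ∈ univ.erase j, (c h : ℝ) = n := by
    exact_mod_cast (add_sum_erase _ c (mem_univ j)).trans hc
  rw [div_le_iff₀ (by positivity)]
  calc ∑ h ∈ univ.erase j, (c h : ℝ) * (b - c h)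
      ≤ b * (∑ h ∈ univ.erase j, (c h : ℝ) - b) := sum_mul_sup_sub_le _ c
    _ ≤ b * (n - 2 * b) := mul_le_mul_of_nonneg_left (by linarith) (Nat.cast_nonneg b)
    _ ≤ 1 / 8 * (n : ℝ) ^ 2 := by linarith [sq_nonneg ((n : ℝ) - 4 * b)]
end

section
/- For every k-cd c̄ for n nodes, it holds that Σ_{h∈[k]} c_h² ≤ n·m(c̄) − (n − m(c̄))·s(c̄). -/
open Finset

/-!
Fix a color `j` of maximum size `m`. Every other color has size at most `m - s`, also when the
maximum is not unique, since then `s = 0`. Bounding one factor of each square `c_h²`, `h ≠ j`, by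
`m - s` gives `Σ_h c_h² ≤ m² + (m - s) (n - m)`, and the right-hand side is `n m - (n - m) s`.
-/

lemma sum_sq_le_mul_sum_of_le {ι R : Type*} [Semiring R] [PartialOrder R] [IsOrderedRing R]
    {s : Finset ι} {f : ι → R} {t : R} (h_nonneg : ∀ i ∈ s, 0 ≤ f i) (h_le : ∀ i ∈ s, f i ≤ t) :
    ∑ i ∈ s, f i ^ 2 ≤ t * ∑ i ∈ s, f i := by
  rw [mul_sum]
  refine sum_le_sum fun i hi ↦ ?_
  rw [sq]
  exact mul_le_mul_of_nonneg_right (h_le i hi) (h_nonneg i hi)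

section ColoringDistribution

variable {k : ℕ} (c : Fin k → ℕ)

lemma le_mval (h : Fin k) : c h ≤ mval c :=
  le_sup (mem_univ h)

lemma exists_eq_mval [Nonempty (Fin k)] : ∃ j, c j = mval c := by
  obtain ⟨j, -, hj⟩ := exists_mem_eq_sup univ univ_nonempty c
  exact ⟨j, hj.symm⟩

variable {c}

lemma add_sval_le_mval {h j : Fin k} (hj : c j = mval c) (hne : h ≠ j) :
    c h + sval c ≤ mval c := by
  unfold sval
  split_ifs with h_unique
  · have hj_mem : j ∈ Mset c := by simp [Mset, hj]
    have hh_notMem : h ∉ Mset c := fun hh ↦ hne (card_le_one.mp h_unique.le h hh j hj_mem)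
    have h_le_second : c h ≤ (univ \ Mset c).sup c :=
      le_sup (mem_sdiff.mpr ⟨mem_univ h, hh_notMem⟩)
    have h_second_le : (univ \ Mset c).sup c ≤ mval c := sup_mono sdiff_subset
    omega
  · exact le_mval c h

end ColoringDistribution

/-- For every `k`-cd `c̄`, `Σ_h c_h² ≤ n·m(c̄) − (n − m(c̄))·s(c̄)`. -/
theorem sum_sq_le (n k : ℕ) (c : Fin k → ℕ) (hc : ∑ h, c h = n) :
    (∑ h, (c h : ℝ) ^ 2) ≤ (n : ℝ) * (mval c : ℝ) - ((n : ℝ) - (mval c : ℝ)) * (sval c : ℝ) := by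
  rcases isEmpty_or_nonempty (Fin k) with _ | _
  · simp [← hc, mval]
  obtain ⟨j, hj⟩ := exists_eq_mval c
  have h_le_gap : ∀ h ∈ univ.erase j, (c h : ℝ) ≤ mval c - sval c := fun h hh ↦
    le_sub_iff_add_le.mpr (mod_cast add_sval_le_mval hj (ne_of_mem_erase hh))
  have h_sum_others : ∑ h ∈ univ.erase j, (c h : ℝ) = n - mval c := by
    rw [sum_erase_eq_sub (mem_univ j), hj, ← hc, Nat.cast_sum]
  calc ∑ h, (c h : ℝ) ^ 2
      = (mval c : ℝ) ^ 2 + ∑ h ∈ univ.erase j, (c h : ℝ) ^ 2 := by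
        rw [← add_sum_erase univ _ (mem_univ j), hj]
    _ ≤ (mval c : ℝ) ^ 2 + (mval c - sval c) * ∑ h ∈ univ.erase j, (c h : ℝ) := by
        gcongr
        exact sum_sq_le_mul_sum_of_le (fun h _ ↦ Nat.cast_nonneg (c h)) h_le_gap
    _ = n * mval c - (n - mval c) * sval c := by
        rw [h_sum_others]
        ring
end

section
/- For every k-cd c̄ for n nodes (n ≥ 1) and every color j ∈ [k], the expected number of nodes colored j after one step of the 3-majority dynamics from configuration c̄ satisfies μ_j(c̄) = c_j·(1 + (n·c_j − Σ_{h∈[k]} c_h²)/n²); equivalently, the probability that a fixed node adopts color j in one step is (c_j/n)·(1 + (n·c_j − Σ_{h∈[k]} c_h²)/n²). -/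
open Finset

/-!
A node adopts color `j` iff its last two samples are both `j`, or they differ and the first one
is `j`. With `p h` the fraction of nodes colored `h`, independence of the three samples gives this
event probability `p j ^ 2 + p j * (1 - ∑ h, p h ^ 2)`, as two samples collide with probability
`∑ h, p h ^ 2`. The expected number of nodes colored `j` follows by linearity.
-/

open scoped BigOperators

section Expect

variable {ι β M : Type*} [Fintype ι] [Fintype β] [AddCommMonoid M] [Module ℚ≥0 M]

lemma expect_prod_fst {γ : Type*} [Fintype γ] [Nonempty γ] (f : β → M) :
    𝔼 x : β × γ, f x.1 = 𝔼 b, f b := by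
  rw [← univ_product_univ, expect_product]
  simp only [expect_const univ_nonempty]

lemma expect_pi_apply [DecidableEq ι] [Nonempty β] (f : β → M) (i : ι) :
    𝔼 S : ι → β, f (S i) = 𝔼 x, f x :=
  (Fintype.expect_equiv (Equiv.funSplitAt i β) _ (fun x ↦ f x.1) fun _ ↦ rfl).trans
    (expect_prod_fst f)

end Expect

section ColorFreq

variable {ι κ : Type*} [Fintype ι] [DecidableEq κ]

/-- The color distribution of an assignment `a`: the probability that a uniformly random node has
color `h`. It is encoded as an average so that it combines with expectations over samples. -/
noncomputable def colorFreq (a : ι → κ) (h : κ) : ℝ :=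
  𝔼 x, if a x = h then 1 else 0

lemma colorFreq_eq_cnt_div {n k : ℕ} (a : Fin n → Fin k) (h : Fin k) :
    colorFreq a h = cnt a h / n := by
  rw [colorFreq, Fintype.expect_eq_sum_div_card, sum_boole, Fintype.card_fin, cnt]

lemma colorFreq_mul_colorFreq (a : ι → κ) (g h : κ) :
    colorFreq a g * colorFreq a h = 𝔼 x, 𝔼 y, if a x = g ∧ a y = h then 1 else 0 := by
  simp only [colorFreq, expect_mul_expect, ite_zero_mul_ite_zero, mul_one]

lemma expect_ite_eq_sum_colorFreq_sq [Fintype κ] (a : ι → κ) :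
    𝔼 x, 𝔼 y, (if a x = a y then 1 else 0) = ∑ h, colorFreq a h ^ 2 := by
  have sum_over_common_color (x y : ι) :
      (if a x = a y then (1 : ℝ) else 0) = ∑ h, if a x = h ∧ a y = h then 1 else 0 := by
    simp only [ite_and, sum_ite_eq, mem_univ, if_true, eq_comm (a := a y) (b := a x)]
  simp only [sum_over_common_color, expect_sum_comm, sq, colorFreq_mul_colorFreq]

end ColorFreq

section Majority

variable {k : ℕ}

lemma ite_maj3_eq {R : Type*} [Ring R] (x y z j : Fin k) :
    (if maj3 x y z = j then (1 : R) else 0) =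
      (if y = j ∧ z = j then 1 else 0) +
        (if x = j then 1 else 0) * (1 - if y = z then 1 else 0) := by
  unfold maj3
  split_ifs <;> simp_all

lemma expect_ite_maj3_eq {ι : Type*} [Fintype ι] [Nonempty ι] (a : ι → Fin k) (j : Fin k) :
    𝔼 s : ι × ι × ι, (if maj3 (a s.1) (a s.2.1) (a s.2.2) = j then 1 else 0) =
      colorFreq a j * (1 + colorFreq a j - ∑ h, colorFreq a h ^ 2) := by
  calc
    _ = 𝔼 x, 𝔼 y, 𝔼 z, if maj3 (a x) (a y) (a z) = j then (1 : ℝ) else 0 := by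
      simp only [← univ_product_univ, expect_product]
    _ = (𝔼 y, 𝔼 z, if a y = j ∧ a z = j then 1 else 0) +
        (𝔼 x, if a x = j then 1 else 0) * (1 - 𝔼 y, 𝔼 z, if a y = a z then 1 else 0) := by
      simp only [ite_maj3_eq, expect_add_distrib, expect_sub_distrib, ← mul_expect, ← expect_mul,
        expect_const univ_nonempty]
    _ = colorFreq a j * colorFreq a j + colorFreq a j * (1 - ∑ h, colorFreq a h ^ 2) := by
      rw [colorFreq_mul_colorFreq, expect_ite_eq_sum_colorFreq_sq, colorFreq]
    _ = _ := by ring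

end Majority

section Step

variable {n k : ℕ} (a : Fin n → Fin k)

lemma stepE_eq_expect (f : (Fin n → Fin k) → ℝ) : stepE a f = 𝔼 S, f (stepA a S) := by
  rw [stepE, Fintype.expect_eq_sum_div_card, Nat.card_eq_fintype_card]

lemma stepPr_eq_expect (E : (Fin n → Fin k) → Prop) [DecidablePred E] :
    stepPr a E = 𝔼 S, if E (stepA a S) then 1 else 0 := by
  rw [stepPr, Fintype.expect_eq_sum_div_card, sum_boole, Nat.card_eq_fintype_card,
    Nat.card_eq_fintype_card, Fintype.card_subtype]

lemma stepE_cnt_eq_sum_stepPr (j : Fin k) :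
    stepE a (fun b ↦ (cnt b j : ℝ)) = ∑ i, stepPr a (fun b ↦ b i = j) := by
  simp only [stepE_eq_expect, stepPr_eq_expect, cnt, ← sum_boole, expect_sum_comm]

lemma stepPr_apply_eq (i : Fin n) (j : Fin k) :
    stepPr a (fun b ↦ b i = j) =
      colorFreq a j * (1 + colorFreq a j - ∑ h, colorFreq a h ^ 2) := by
  have : Nonempty (Fin n) := ⟨i⟩
  rw [stepPr_eq_expect, ← expect_ite_maj3_eq]
  exact expect_pi_apply
    (fun s : Fin n × Fin n × Fin n ↦ if maj3 (a s.1) (a s.2.1) (a s.2.2) = j then (1 : ℝ) else 0) i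

end Step

/-- The expected number of nodes colored `j` after one step of the 3-majority dynamics is
`μ_j(c̄) = c_j·(1 + (n·c_j − Σ_h c_h²)/n²)`; equivalently, each fixed node adopts color `j`
with probability `(c_j/n)·(1 + (n·c_j − Σ_h c_h²)/n²)`. -/
theorem mu_eq (n k : ℕ) (hn : 1 ≤ n) (c : Fin k → ℕ) (hc : ∑ h, c h = n)
    (a : Fin n → Fin k) (ha : ∀ h, cnt a h = c h) (j : Fin k) :
    stepE a (fun b => (cnt b j : ℝ)) =
      (c j : ℝ) * (1 + ((n : ℝ) * (c j : ℝ) - ∑ h, (c h : ℝ) ^ 2) / (n : ℝ) ^ 2) ∧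
    ∀ i : Fin n, stepPr a (fun b => b i = j) =
      ((c j : ℝ) / (n : ℝ)) * (1 + ((n : ℝ) * (c j : ℝ) - ∑ h, (c h : ℝ) ^ 2) / (n : ℝ) ^ 2) := by
  have hn₀ : (n : ℝ) ≠ 0 := by positivity
  have adopt_prob (i : Fin n) : stepPr a (fun b ↦ b i = j) =
      (c j / n) * (1 + (n * c j - ∑ h, (c h : ℝ) ^ 2) / n ^ 2) := by
    simp only [stepPr_apply_eq, colorFreq_eq_cnt_div, ha, div_pow, ← sum_div]
    field_simp
    ring
  refine ⟨?_, adopt_prob⟩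
  rw [stepE_cnt_eq_sum_stepPr]
  simp only [adopt_prob, sum_const, card_univ, Fintype.card_fin, nsmul_eq_mul]
  field_simp
end

section
/- Let c̄ be a k-cd for n nodes (n ≥ 1) with M(c̄) = {m} for some m ∈ [k], and let j ∈ [k] ∖ {m}. Then the variance of C_{m,t+1} − C_{j,t+1} conditioned on C_t = c̄ is at most 3·c_m. -/
open Finset

/-!
The nodes sample independently, so `Var[C_m - C_j]` is the sum over the nodes of the variances of
`[new color = m] - [new color = j]`. Each of these is at most the second moment of that variable,
hence at most `P(new color = m) + P(new color = j)`, and summing over the nodes gives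
`Var[C_m - C_j] ≤ E[C_m] + E[C_j]`. Finally `E[C_h] = c_h (1 + (n c_h - ∑ c_g²) / n²)`, where the
drift term is at most `x - x² ≤ 1/4` for `x = c_h / n`.
-/

open MeasureTheory ProbabilityTheory

lemma integral_uniformOn_univ {Ω E : Type*} [Fintype Ω] [MeasurableSpace Ω]
    [MeasurableSingletonClass Ω] [NormedAddCommGroup E] [NormedSpace ℝ E] [CompleteSpace E]
    (f : Ω → E) :
    ∫ ω, f ω ∂uniformOn Set.univ = (Fintype.card Ω : ℝ)⁻¹ • ∑ ω, f ω := by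
  simp [uniformOn, ProbabilityTheory.cond, integral_smul_measure]

lemma variance_sum_pi_le {ι : Type*} [Fintype ι] {Ω : ι → Type*} [∀ i, MeasurableSpace (Ω i)]
    {μ : (i : ι) → Measure (Ω i)} [∀ i, IsProbabilityMeasure (μ i)] {X : (i : ι) → Ω i → ℝ}
    (hX : ∀ i, MemLp (X i) 2 (μ i)) :
    Var[∑ i, fun ω ↦ X i (ω i); Measure.pi μ] ≤ ∑ i, ∫ x, X i x ^ 2 ∂μ i := by
  rw [variance_sum_pi hX]
  exact sum_le_sum fun i _ ↦ variance_le_expectation_sq (hX i).aestronglyMeasurable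

section ThreeMajority

variable {n k : ℕ}

/-- The law of the three nodes sampled by a single node: uniform on ordered triples. It is the
zero measure when there are no nodes. -/
noncomputable abbrev tripleLaw (n : ℕ) : Measure (Fin n × Fin n × Fin n) :=
  uniformOn Set.univ

/-- The color adopted by a node that samples the triple `t` in the configuration `a`. -/
def adopt (a : Fin n → Fin k) (t : Fin n × Fin n × Fin n) : Fin k :=
  maj3 (a t.1) (a t.2.1) (a t.2.2)

instance isProbabilityMeasure_tripleLaw [NeZero n] : IsProbabilityMeasure (tripleLaw n) :=
  isProbabilityMeasure_uniformOn Set.finite_univ Set.univ_nonempty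

lemma stepE_eq_integral (a : Fin n → Fin k) (f : (Fin n → Fin k) → ℝ) :
    stepE a f = ∫ S, f (stepA a S) ∂Measure.pi fun _ : Fin n ↦ tripleLaw n := by
  rw [← uniformOn_pi, Set.pi_univ, integral_uniformOn_univ, stepE, Nat.card_eq_fintype_card,
    smul_eq_mul, div_eq_inv_mul]

lemma stepE_sq_sub_stepE_eq_variance (a : Fin n → Fin k) (f : (Fin n → Fin k) → ℝ) :
    stepE a (fun b ↦ (f b - stepE a f) ^ 2) =
      Var[fun S ↦ f (stepA a S); Measure.pi fun _ : Fin n ↦ tripleLaw n] := by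
  rw [variance_eq_integral (measurable_of_finite _).aemeasurable, stepE_eq_integral a f,
    stepE_eq_integral]

lemma cast_cnt_eq_sum (b : Fin n → Fin k) (h : Fin k) :
    (cnt b h : ℝ) = ∑ i, if b i = h then 1 else 0 := by
  simp [cnt]

lemma cast_cnt_stepA (a : Fin n → Fin k) (S : Sample n) (h : Fin k) :
    (cnt (stepA a S) h : ℝ) = ∑ i, if adopt a (S i) = h then 1 else 0 :=
  cast_cnt_eq_sum _ h

lemma stepE_cnt_eq_mul_integral (a : Fin n → Fin k) (h : Fin k) :
    stepE a (fun b ↦ (cnt b h : ℝ)) =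
      n * ∫ t, (if adopt a t = h then 1 else 0) ∂tripleLaw n := by
  rcases eq_zero_or_neZero n with rfl | _
  · simp [stepE, cnt]
  let X (t : Fin n × Fin n × Fin n) : ℝ := if adopt a t = h then 1 else 0
  have hX (i : Fin n) :
      ∫ S, X (S i) ∂Measure.pi (fun _ : Fin n ↦ tripleLaw n) = ∫ t, X t ∂tripleLaw n :=
    integral_comp_eval (measurable_of_finite X).aestronglyMeasurable
  simp_rw [stepE_eq_integral, cast_cnt_stepA]
  rw [integral_finsetSum _ fun _ _ ↦ .of_finite]
  simp [X, hX]

lemma ite_adopt_eq (a : Fin n → Fin k) (h : Fin k) (x y z : Fin n) :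
    (if adopt a (x, y, z) = h then (1 : ℝ) else 0) =
      (if a x = h then 1 else 0) + (if a y = h then 1 else 0) * (if a z = h then 1 else 0) -
        (if a x = h then 1 else 0) * (if a y = a z then 1 else 0) := by
  unfold adopt maj3
  split_ifs <;> simp_all

lemma sum_sum_ite_eq_eq_sum_cnt_sq (a : Fin n → Fin k) :
    ∑ y, ∑ z, (if a y = a z then (1 : ℝ) else 0) = ∑ g, (cnt a g : ℝ) ^ 2 := by
  have hfiber (y : Fin n) : ∑ z, (if a y = a z then (1 : ℝ) else 0) = cnt a (a y) := by
    simp_rw [cast_cnt_eq_sum, eq_comm]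
  simp_rw [hfiber, ← sum_fiberwise' univ a fun g ↦ (cnt a g : ℝ), sum_const, nsmul_eq_mul, sq, cnt]

lemma sum_ite_adopt_eq (a : Fin n → Fin k) (h : Fin k) :
    ∑ t, (if adopt a t = h then (1 : ℝ) else 0) =
      cnt a h * (n ^ 2 + (n * cnt a h - ∑ g, (cnt a g : ℝ) ^ 2)) := by
  simp only [Fintype.sum_prod_type, ite_adopt_eq, sum_add_distrib, sum_sub_distrib, ← mul_sum,
    ← sum_mul, sum_sum_ite_eq_eq_sum_cnt_sq, sum_const, card_univ, Fintype.card_fin, nsmul_eq_mul]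
  simp only [← cast_cnt_eq_sum]
  ring

lemma stepE_cnt_eq (a : Fin n → Fin k) (h : Fin k) :
    stepE a (fun b ↦ (cnt b h : ℝ)) =
      cnt a h * (1 + (n * cnt a h - ∑ g, (cnt a g : ℝ) ^ 2) / n ^ 2) := by
  rcases eq_zero_or_neZero n with rfl | _
  · simp [stepE, cnt]
  have hn : (n : ℝ) ≠ 0 := NeZero.ne _
  rw [stepE_cnt_eq_mul_integral, integral_uniformOn_univ, sum_ite_adopt_eq]
  simp only [Fintype.card_prod, Fintype.card_fin, Nat.cast_mul, smul_eq_mul]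
  field

lemma stepE_cnt_le (a : Fin n → Fin k) (h : Fin k) :
    stepE a (fun b ↦ (cnt b h : ℝ)) ≤ 5 / 4 * cnt a h := by
  rw [stepE_cnt_eq, mul_comm (5 / 4 : ℝ)]
  have hsq : (cnt a h : ℝ) ^ 2 ≤ ∑ g, (cnt a g : ℝ) ^ 2 :=
    single_le_sum (f := fun g ↦ (cnt a g : ℝ) ^ 2) (fun _ _ ↦ sq_nonneg _) (mem_univ h)
  have hdrift : (n * cnt a h - ∑ g, (cnt a g : ℝ) ^ 2) / n ^ 2 ≤ 1 / 4 :=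
    div_le_of_le_mul₀ (by positivity) (by norm_num) <| by
      nlinarith [sq_nonneg ((n : ℝ) / 2 - cnt a h)]
  gcongr
  linarith

lemma variance_cnt_sub_cnt_le (a : Fin n → Fin k) (m j : Fin k) :
    Var[fun S ↦ (cnt (stepA a S) m : ℝ) - cnt (stepA a S) j;
        Measure.pi fun _ : Fin n ↦ tripleLaw n] ≤
      stepE a (fun b ↦ (cnt b m : ℝ)) + stepE a (fun b ↦ (cnt b j : ℝ)) := by
  rcases eq_zero_or_neZero n with rfl | _
  · simp [stepE, cnt, variance_eq_integral]
  let ind (h : Fin k) (t : Fin n × Fin n × Fin n) : ℝ := if adopt a t = h then 1 else 0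
  have hsq (t) : (ind m t - ind j t) ^ 2 ≤ ind m t + ind j t := by
    simp only [ind]
    split_ifs <;> norm_num
  calc
    _ = Var[∑ i, fun S : Sample n ↦ ind m (S i) - ind j (S i);
          Measure.pi fun _ : Fin n ↦ tripleLaw n] := by
      congr 1 with S
      simp [cast_cnt_stepA, ind]
    _ ≤ ∑ _i : Fin n, ∫ t, (ind m t - ind j t) ^ 2 ∂tripleLaw n :=
      variance_sum_pi_le (X := fun _ t ↦ ind m t - ind j t) fun _ ↦ .of_discrete
    _ ≤ ∑ _i : Fin n, ∫ t, (ind m t + ind j t) ∂tripleLaw n :=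
      sum_le_sum fun _ _ ↦ integral_mono .of_finite .of_finite hsq
    _ = _ := by simp [integral_add, stepE_cnt_eq_mul_integral, ind]

end ThreeMajority

lemma le_of_mem_mset {k : ℕ} {c : Fin k → ℕ} {m : Fin k} (hm : m ∈ Mset c) (j : Fin k) :
    c j ≤ c m :=
  (le_sup (mem_univ j)).trans_eq (mem_filter.mp hm).2.symm

theorem variance_gap_le_general {n k : ℕ} (a : Fin n → Fin k) (m j : Fin k) :
    stepE a (fun b ↦
        ((cnt b m : ℝ) - (cnt b j : ℝ) -
          stepE a (fun b' ↦ (cnt b' m : ℝ) - (cnt b' j : ℝ))) ^ 2) ≤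
      5 / 4 * ((cnt a m : ℝ) + cnt a j) := by
  rw [stepE_sq_sub_stepE_eq_variance a fun b ↦ (cnt b m : ℝ) - cnt b j, mul_add]
  exact (variance_cnt_sub_cnt_le a m j).trans (add_le_add (stepE_cnt_le a m) (stepE_cnt_le a j))

/-- If `M(c̄) = {m}` and `j ≠ m`, the variance of `C_{m,t+1} − C_{j,t+1}` conditioned on
`C_t = c̄` is at most `3·c_m`. -/
theorem variance_gap_le (n k : ℕ) (hn : 1 ≤ n) (c : Fin k → ℕ) (hc : ∑ h, c h = n)
    (a : Fin n → Fin k) (ha : ∀ h, cnt a h = c h) (m : Fin k) (hM : Mset c = {m})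
    (j : Fin k) (hj : j ≠ m) :
    stepE a (fun b =>
        ((cnt b m : ℝ) - (cnt b j : ℝ) -
          stepE a (fun b' => (cnt b' m : ℝ) - (cnt b' j : ℝ))) ^ 2) ≤ 3 * (c m : ℝ) := by
  have hjm : (c j : ℝ) ≤ c m := mod_cast le_of_mem_mset (by simp [hM]) j
  linarith [ha m ▸ ha j ▸ variance_gap_le_general a m j, (c m).cast_nonneg (α := ℝ)]
end

section
/- (Large majority and large bias, first bound.) Let c̄ be a k-cd for n nodes with M(c̄) = {m} for some m ∈ [k], and let λ be a value with 0 < λ ≤ 2/3. If λ·n ≤ c_m ≤ (2/3)·n and s(c̄) ≥ 22·√((1/λ)·n·log n), then for every j ∈ [k] ∖ {m}, Pr[ C_{m,t+1} − C_{j,t+1} ≤ s(c̄)·(1 + λ/6) | C_t = c̄ ] ≤ 1/n². -/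
open Finset

/-! Let `s` be the bias, `σ = s / n` and `θ = σ / 15`. A node contributes `1`, `-1` or `0` to the
new gap between `m` and `j`, and the nodes choose independently, so Chernoff's method bounds the
probability of a gap of at most `T` by `exp (θ T + n (u (exp (-θ) - 1) + v (exp θ - 1)))`, where `u`
and `v` are the probabilities that a node adopts `m` and `j`. With color frequencies `p`, color `h`
is adopted with probability `p h (1 + p h - ∑ g, p g ^ 2)`. Every other color is at least `σ` below
`p m`, which bounds `∑ g, p g ^ 2` from above and gives the drift `u - v ≥ σ (1 + p m (1 - σ))`.
Since `λ ≤ p m` and `σ ≤ p m ≤ 2 / 3`, the drift exceeds `σ (1 + λ / 6)` by enough to absorb the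
second-order term `θ ^ 2 (u + v)`, and the exponent is at most `-n p m σ ^ 2 / 180 ≤ -2 log n`. -/

/-- The fraction of points of `Ω` at which `f` takes the value `b`: the probability of `f = b`
for a uniform point of `Ω`. It is `0` when `Ω` is empty. -/
noncomputable def freq {Ω β : Type*} [Fintype Ω] [DecidableEq β] (f : Ω → β) (b : β) : ℝ :=
  #{x | f x = b} / Fintype.card Ω

section Chernoff

variable {ι Ω β : Type*} [Fintype Ω] [DecidableEq β]

lemma freq_nonneg (f : Ω → β) (b : β) : 0 ≤ freq f b := by
  unfold freq; positivity

lemma card_mul_freq [Nonempty Ω] (f : Ω → β) (b : β) :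
    Fintype.card Ω * freq f b = #{x | f x = b} :=
  mul_div_cancel₀ _ (Nat.cast_ne_zero.2 Fintype.card_ne_zero)

lemma sum_freq_eq_one [Nonempty Ω] [Fintype β] (f : Ω → β) : ∑ b, freq f b = 1 := by
  simp only [freq, ← sum_div, ← Nat.cast_sum]
  rw [← card_eq_sum_card_fiberwise fun x _ => mem_univ (f x), card_univ,
    div_self (Nat.cast_ne_zero.2 Fintype.card_ne_zero)]

lemma sum_exp_indicator_sub [Nonempty Ω] (f : Ω → β) {m j : β} (hj : j ≠ m) (θ : ℝ) :
    ∑ x, Real.exp (-θ * ((if f x = m then 1 else 0) - (if f x = j then 1 else 0))) =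
      Fintype.card Ω *
        (1 + (freq f m * (Real.exp (-θ) - 1) + freq f j * (Real.exp θ - 1))) := by
  have pointwise : ∀ x,
      Real.exp (-θ * ((if f x = m then 1 else 0) - (if f x = j then 1 else 0))) =
        1 + ((if f x = m then 1 else 0) * (Real.exp (-θ) - 1) +
          (if f x = j then 1 else 0) * (Real.exp θ - 1)) := by
    intro x
    rcases eq_or_ne (f x) m with hm | hm
    · simp [hm, hj.symm]
    · by_cases hx : f x = j <;> simp [hm, hx, hj]
  simp_rw [pointwise, sum_add_distrib, ← sum_mul, sum_boole, mul_add, ← mul_assoc, card_mul_freq]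
  simp

variable [Fintype ι]

theorem card_sum_le_le_exp_mul_pow (X : Ω → ℝ) {θ : ℝ} (hθ : 0 ≤ θ) (T : ℝ) :
    (Nat.card {S : ι → Ω // ∑ i, X (S i) ≤ T} : ℝ) ≤
      Real.exp (θ * T) * (∑ x, Real.exp (-θ * X x)) ^ Fintype.card ι := by
  classical
  have sum_pow_eq : (∑ x, Real.exp (-θ * X x)) ^ Fintype.card ι =
      ∑ S : ι → Ω, Real.exp (-θ * ∑ i, X (S i)) := by
    simp_rw [mul_sum, Real.exp_sum, ← Fintype.piFinset_univ,
      ← prod_univ_sum (fun _ => univ) fun _ x => Real.exp (-θ * X x), prod_const, card_univ]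
  rw [sum_pow_eq, mul_sum, Nat.card_eq_fintype_card, Fintype.card_subtype, card_filter,
    Nat.cast_sum]
  refine sum_le_sum fun S _ => ?_
  rw [← Real.exp_add]
  split_ifs with hS
  · rw [Nat.cast_one, Real.one_le_exp_iff]
    linarith [mul_le_mul_of_nonneg_left hS hθ]
  · simpa using Real.exp_nonneg _

theorem uniform_gap_le_le_exp [Nonempty Ω] (f : Ω → β) {m j : β} (hj : j ≠ m)
    {θ : ℝ} (hθ : 0 ≤ θ) (T : ℝ) :
    (Nat.card {S : ι → Ω // (#{i | f (S i) = m} : ℝ) - #{i | f (S i) = j} ≤ T} : ℝ) /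
        Nat.card (ι → Ω) ≤
      Real.exp (θ * T + Fintype.card ι *
        (freq f m * (Real.exp (-θ) - 1) + freq f j * (Real.exp θ - 1))) := by
  set w := freq f m * (Real.exp (-θ) - 1) + freq f j * (Real.exp θ - 1) with hw
  have hcard : (0 : ℝ) < Nat.card (ι → Ω) := Nat.cast_pos.2 Nat.card_pos
  have mgf_le : ∑ x, Real.exp (-θ * ((if f x = m then 1 else 0) - (if f x = j then 1 else 0))) ≤
      Fintype.card Ω * Real.exp w := by
    rw [sum_exp_indicator_sub f hj, ← hw, add_comm]
    gcongr
    exact Real.add_one_le_exp w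
  rw [div_le_iff₀ hcard]
  calc (Nat.card {S : ι → Ω // (#{i | f (S i) = m} : ℝ) - #{i | f (S i) = j} ≤ T} : ℝ)
      ≤ Real.exp (θ * T) * (∑ x, Real.exp
          (-θ * ((if f x = m then 1 else 0) - (if f x = j then 1 else 0)))) ^ Fintype.card ι := by
        simpa only [sum_sub_distrib, sum_boole] using card_sum_le_le_exp_mul_pow (ι := ι)
          (fun x => (if f x = m then 1 else 0) - (if f x = j then 1 else 0)) hθ T
    _ ≤ Real.exp (θ * T) * (Fintype.card Ω * Real.exp w) ^ Fintype.card ι := by gcongr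
    _ = Real.exp (θ * T + Fintype.card ι * w) * Nat.card (ι → Ω) := by
        rw [mul_pow, ← Real.exp_nat_mul, Real.exp_add, Nat.card_fun, Nat.card_eq_fintype_card,
          Nat.card_eq_fintype_card, Nat.cast_pow]
        ring

end Chernoff

/-- The probability that a node adopts color `h` in one step of the 3-majority dynamics when the
colors have frequencies `p`; see `freq_sampleMaj`. -/
def adoptProb {ι : Type*} [Fintype ι] (p : ι → ℝ) (h : ι) : ℝ :=
  p h * (1 + p h - ∑ g, p g ^ 2)

section Drift

variable {ι : Type*} [Fintype ι] {p : ι → ℝ} {m j : ι} {σ : ℝ}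

lemma sum_sq_le_one (hp0 : ∀ h, 0 ≤ p h) (hp1 : ∑ h, p h = 1) : ∑ h, p h ^ 2 ≤ 1 := by
  rw [← hp1]
  gcongr with h hh
  exact pow_le_of_le_one (hp0 h) (hp1 ▸ single_le_sum (fun g _ => hp0 g) hh) two_ne_zero

lemma sum_sq_le_of_gap (hp0 : ∀ h, 0 ≤ p h) (hp1 : ∑ h, p h = 1)
    (hgap : ∀ h ≠ m, p h + σ ≤ p m) : ∑ h, p h ^ 2 ≤ p m - (1 - p m) * σ := by
  classical
  have hrest : ∑ h ∈ univ.erase m, p h = 1 - p m := by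
    rw [← hp1, ← add_sum_erase univ p (mem_univ m), add_sub_cancel_left]
  calc ∑ h, p h ^ 2 = p m ^ 2 + ∑ h ∈ univ.erase m, p h ^ 2 :=
        (add_sum_erase univ (fun h => p h ^ 2) (mem_univ m)).symm
    _ ≤ p m ^ 2 + ∑ h ∈ univ.erase m, p h * (p m - σ) := by
        gcongr with h hh
        rw [sq]
        exact mul_le_mul_of_nonneg_left (by linarith [hgap h (ne_of_mem_erase hh)]) (hp0 h)
    _ = p m - (1 - p m) * σ := by rw [← sum_mul, hrest]; ring

lemma le_adoptProb_sub_adoptProb (hp0 : ∀ h, 0 ≤ p h) (hp1 : ∑ h, p h = 1)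
    (hgap : ∀ h ≠ m, p h + σ ≤ p m) (hσ : 0 ≤ σ) (hj : j ≠ m) :
    σ * (1 + p m * (1 - σ)) ≤ adoptProb p m - adoptProb p j := by
  have hS := sum_sq_le_of_gap hp0 hp1 hgap
  have hS1 := sum_sq_le_one hp0 hp1
  unfold adoptProb
  set S := ∑ h, p h ^ 2
  have hgap_j := hgap j hj
  calc σ * (1 + p m * (1 - σ)) ≤ σ * (1 + p m + (p m - σ) - S) := by
        gcongr
        linarith
    _ ≤ σ * (1 + p m + (p m - σ) - S) + (p m - p j - σ) * (1 - S + p j + (p m - σ)) :=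
        le_add_of_nonneg_right <| mul_nonneg (by linarith) (by linarith [hp0 j])
    _ = p m * (1 + p m - S) - p j * (1 + p j - S) := by ring

lemma adoptProb_nonneg (hp0 : ∀ h, 0 ≤ p h) (hp1 : ∑ h, p h = 1) (h : ι) :
    0 ≤ adoptProb p h :=
  mul_nonneg (hp0 h) (by linarith [hp0 h, sum_sq_le_one hp0 hp1])

lemma adoptProb_le (hp0 : ∀ h, 0 ≤ p h) (h : ι) : adoptProb p h ≤ 5 / 4 * p h := by
  have hS : p h ^ 2 ≤ ∑ g, p g ^ 2 :=
    single_le_sum (f := fun g => p g ^ 2) (fun _ _ => sq_nonneg _) (mem_univ h)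
  rw [adoptProb, mul_comm]
  exact mul_le_mul_of_nonneg_right (by linarith [sq_nonneg (p h - 1 / 2)]) (hp0 h)

-- The tilt `σ / 15` is the minimizer of the quadratic bound on the exponent in the extreme case
-- `p m = σ = 2 / 3`, `p j = 0`.
theorem adoptProb_exp_rate_le (hp0 : ∀ h, 0 ≤ p h) (hp1 : ∑ h, p h = 1)
    (hgap : ∀ h ≠ m, p h + σ ≤ p m) (hσ : 0 ≤ σ) (hm : p m ≤ 2 / 3) (hj : j ≠ m) :
    σ / 15 * (σ * (1 + p m / 6)) + (adoptProb p m * (Real.exp (-(σ / 15)) - 1) +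
      adoptProb p j * (Real.exp (σ / 15) - 1)) ≤ -(p m * σ ^ 2 / 180) := by
  have hgap_j := hgap j hj
  have hσm : σ ≤ p m := by linarith [hp0 j]
  have exp_sub_one_le : ∀ x : ℝ, |x| ≤ 1 → Real.exp x - 1 ≤ x + x ^ 2 := fun x hx => by
    linarith [(abs_le.1 (Real.abs_exp_sub_one_sub_id_le hx)).2]
  have hθ : |σ / 15| ≤ 1 := by rw [abs_le]; constructor <;> linarith
  have hdrift := le_adoptProb_sub_adoptProb hp0 hp1 hgap hσ hj
  have hvar : adoptProb p m + adoptProb p j ≤ 5 / 4 * (2 * p m - 3 / 2 * p m * σ) := by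
    linarith [adoptProb_le hp0 m, adoptProb_le hp0 j, mul_le_mul_of_nonneg_right hm hσ]
  calc σ / 15 * (σ * (1 + p m / 6)) + (adoptProb p m * (Real.exp (-(σ / 15)) - 1) +
        adoptProb p j * (Real.exp (σ / 15) - 1))
      ≤ σ / 15 * (σ * (1 + p m / 6)) + (adoptProb p m * (-(σ / 15) + (-(σ / 15)) ^ 2) +
        adoptProb p j * (σ / 15 + (σ / 15) ^ 2)) := by
        gcongr
        · exact adoptProb_nonneg hp0 hp1 m
        · exact exp_sub_one_le _ (by rwa [abs_neg])
        · exact adoptProb_nonneg hp0 hp1 j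
        · exact exp_sub_one_le _ hθ
    _ = σ / 15 * (σ * (1 + p m / 6) - (adoptProb p m - adoptProb p j)) +
        (σ / 15) ^ 2 * (adoptProb p m + adoptProb p j) := by ring
    _ ≤ σ / 15 * (σ * (1 + p m / 6) - σ * (1 + p m * (1 - σ))) +
        (σ / 15) ^ 2 * (5 / 4 * (2 * p m - 3 / 2 * p m * σ)) := by gcongr
    _ = -(p m * σ ^ 2 / 180) - p m * σ ^ 2 * (7 - 21 / 2 * σ) / 180 := by ring
    _ ≤ -(p m * σ ^ 2 / 180) := by
        have : 0 ≤ p m * σ ^ 2 * (7 - 21 / 2 * σ) :=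
          mul_nonneg (mul_nonneg (hp0 m) (sq_nonneg σ)) (by linarith)
        linarith

end Drift

lemma card_filter_apply_eq_apply {Ω β : Type*} [Fintype Ω] [Fintype β] [DecidableEq β]
    (f : Ω → β) :
    #{x : Ω × Ω | f x.1 = f x.2} = ∑ b, #{x | f x = b} ^ 2 := by
  rw [card_eq_sum_card_fiberwise fun x _ => mem_univ (f x.1)]
  refine sum_congr rfl fun b _ => ?_
  rw [sq, ← card_product]
  congr 1
  ext x
  simp only [mem_filter, mem_product, mem_univ, true_and]
  grind

lemma maj3_eq_iff {k : ℕ} {x y z h : Fin k} :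
    maj3 x y z = h ↔ (y = h ∧ z = h) ∨ (x = h ∧ y ≠ z) := by
  unfold maj3
  grind

/-- The color a node adopts under the 3-majority rule when its three sampled nodes are `x`. -/
def sampleMaj {n k : ℕ} (a : Fin n → Fin k) (x : Fin n × Fin n × Fin n) : Fin k :=
  maj3 (a x.1) (a x.2.1) (a x.2.2)

section Step

variable {n k : ℕ} (a : Fin n → Fin k)

lemma card_sampleMaj_eq (h : Fin k) :
    #{x | sampleMaj a x = h} =
      n * cnt a h ^ 2 + cnt a h * #{y : Fin n × Fin n | a y.1 ≠ a y.2} := by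
  have hsplit : univ.filter (fun x => sampleMaj a x = h) =
      univ ×ˢ (univ.filter (a · = h) ×ˢ univ.filter (a · = h)) ∪
        univ.filter (a · = h) ×ˢ univ.filter (fun y : Fin n × Fin n => a y.1 ≠ a y.2) := by
    ext x
    simp [sampleMaj, maj3_eq_iff]
  rw [hsplit, card_union_of_disjoint, card_product, card_product, card_product, card_univ,
    Fintype.card_fin, sq]
  · rfl
  · rw [disjoint_left]
    simp only [mem_product, mem_filter, mem_univ, true_and]
    grind

lemma cnt_le (h : Fin k) : cnt a h ≤ n :=
  (card_le_univ _).trans_eq (Fintype.card_fin n)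

lemma freq_eq_cnt_div (h : Fin k) : freq a h = cnt a h / n := by
  rw [freq, Fintype.card_fin]
  rfl

lemma freq_sampleMaj [NeZero n] (h : Fin k) :
    freq (sampleMaj a) h = adoptProb (freq a) h := by
  have hpairs : (#{y : Fin n × Fin n | a y.1 ≠ a y.2} : ℝ) = n ^ 2 - ∑ g, (cnt a g : ℝ) ^ 2 := by
    have htotal := card_filter_add_card_filter_not (s := univ)
      fun y : Fin n × Fin n => a y.1 = a y.2
    rw [card_filter_apply_eq_apply, card_univ, Fintype.card_prod, Fintype.card_fin, ← sq] at htotal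
    rw [eq_sub_iff_add_eq']
    exact_mod_cast htotal
  have hn : (n : ℝ) ≠ 0 := NeZero.ne _
  rw [freq, card_sampleMaj_eq, adoptProb]
  simp only [freq_eq_cnt_div, div_pow, ← sum_div, Fintype.card_prod, Fintype.card_fin]
  push_cast [hpairs]
  field_simp
  ring

variable {m j : Fin k}

theorem stepPr_gap_le_exp [NeZero n] (hj : j ≠ m) {θ : ℝ} (hθ : 0 ≤ θ) (T : ℝ) :
    stepPr a (fun b => (cnt b m : ℝ) - cnt b j ≤ T) ≤
      Real.exp (θ * T + n * (adoptProb (freq a) m * (Real.exp (-θ) - 1) +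
        adoptProb (freq a) j * (Real.exp θ - 1))) := by
  rw [← freq_sampleMaj, ← freq_sampleMaj]
  have h := uniform_gap_le_le_exp (ι := Fin n) (sampleMaj a) hj hθ T
  rwa [Fintype.card_fin] at h

theorem stepPr_gap_le_exp_of_bias [NeZero n] {σ T : ℝ}
    (hgap : ∀ h ≠ m, freq a h + σ ≤ freq a m) (hσ : 0 ≤ σ) (hm : freq a m ≤ 2 / 3) (hj : j ≠ m)
    (hT : T ≤ n * (σ * (1 + freq a m / 6))) :
    stepPr a (fun b => (cnt b m : ℝ) - cnt b j ≤ T) ≤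
      Real.exp (-(n * (freq a m * σ ^ 2 / 180))) := by
  have hθ : 0 ≤ σ / 15 := by positivity
  refine (stepPr_gap_le_exp a hj hθ T).trans (Real.exp_le_exp.2 ?_)
  have hrate := mul_le_mul_of_nonneg_left
    (adoptProb_exp_rate_le (freq_nonneg a) (sum_freq_eq_one a) hgap hσ hm hj)
    (Nat.cast_nonneg (α := ℝ) n)
  linarith [mul_le_mul_of_nonneg_left hT hθ]

end Step

section Bias

variable {k : ℕ} {c : Fin k → ℕ} {m : Fin k}

lemma mval_eq_of_Mset_eq_singleton (hM : Mset c = {m}) : mval c = c m := by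
  have hm : m ∈ Mset c := hM ▸ mem_singleton_self m
  exact ((mem_filter.1 hm).2).symm

lemma lt_of_Mset_eq_singleton (hM : Mset c = {m}) {j : Fin k} (hj : j ≠ m) : c j < c m := by
  have hmax : c j ≤ mval c := le_sup (f := c) (mem_univ j)
  have hne : c j ≠ mval c := fun h =>
    hj (mem_singleton.1 (hM ▸ mem_filter.2 ⟨mem_univ j, h⟩))
  exact mval_eq_of_Mset_eq_singleton hM ▸ hmax.lt_of_ne hne

lemma add_sval_le_of_Mset_eq_singleton (hM : Mset c = {m}) {j : Fin k} (hj : j ≠ m) :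
    c j + sval c ≤ c m := by
  have hj_le : c j ≤ (univ \ {m}).sup c := le_sup (f := c) (by simpa using hj)
  have hsup_le : (univ \ {m}).sup c ≤ c m := Finset.sup_le fun h hh =>
    (lt_of_Mset_eq_singleton hM (by simpa using hh)).le
  have hs : sval c = c m - (univ \ {m}).sup c := by
    rw [sval, hM, card_singleton, if_pos rfl, mval_eq_of_Mset_eq_singleton hM]
  lia

end Bias

lemma sq_mul_log_le_mul_sq_div {N lam s C : ℝ} (hN : 1 ≤ N) (hlam : 0 < lam) (hC : 0 ≤ C)
    (hs : C * Real.sqrt (1 / lam * N * Real.log N) ≤ s) :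
    C ^ 2 * Real.log N ≤ lam * s ^ 2 / N := by
  have hlog := Real.log_nonneg hN
  calc C ^ 2 * Real.log N = lam * (C * Real.sqrt (1 / lam * N * Real.log N)) ^ 2 / N := by
        rw [mul_pow, Real.sq_sqrt (by positivity)]
        field_simp
    _ ≤ lam * s ^ 2 / N := by gcongr

-- The constant `22` enters through `2 * 180 ≤ 22 ^ 2`, with `180` from `adoptProb_exp_rate_le`.
lemma exp_neg_bias_le_one_div_sq {N lam p s : ℝ} (hN : 1 ≤ N) (hlam : 0 < lam) (hp : lam ≤ p)
    (hs : 22 * Real.sqrt (1 / lam * N * Real.log N) ≤ s) :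
    Real.exp (-(N * (p * (s / N) ^ 2 / 180))) ≤ 1 / N ^ 2 := by
  have : 0 < N := by linarith
  have hlog : 22 ^ 2 * Real.log N ≤ N * (p * (s / N) ^ 2) := by
    calc 22 ^ 2 * Real.log N ≤ lam * s ^ 2 / N :=
          sq_mul_log_le_mul_sq_div hN hlam (by norm_num) hs
      _ ≤ p * s ^ 2 / N := by gcongr
      _ = N * (p * (s / N) ^ 2) := by field_simp
  calc Real.exp (-(N * (p * (s / N) ^ 2 / 180))) ≤ Real.exp (-Real.log (N ^ 2)) := by
        rw [Real.exp_le_exp, Real.log_pow]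
        push_cast
        linarith [Real.log_nonneg hN]
    _ = 1 / N ^ 2 := by rw [Real.exp_neg, Real.exp_log (by positivity), one_div]

/-- Lemma (large majority and large bias), first bound: if `M(c̄) = {m}`, `0 < λ ≤ 2/3`,
`λ·n ≤ c_m ≤ (2/3)·n` and `s(c̄) ≥ 22·√((1/λ)·n·log n)`, then for every `j ≠ m`,
`Pr[C_{m,t+1} − C_{j,t+1} ≤ s(c̄)·(1 + λ/6) | C_t = c̄] ≤ 1/n²`. -/
theorem large_bias_gap_prob (n k : ℕ) (c : Fin k → ℕ) (hc : ∑ h, c h = n)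
    (a : Fin n → Fin k) (ha : ∀ h, cnt a h = c h) (m : Fin k) (hM : Mset c = {m})
    (lam : ℝ) (hlam0 : 0 < lam) (hlam1 : lam ≤ 2 / 3)
    (hcm1 : lam * (n : ℝ) ≤ (c m : ℝ)) (hcm2 : (c m : ℝ) ≤ 2 / 3 * (n : ℝ))
    (hs : (sval c : ℝ) ≥ 22 * Real.sqrt ((1 / lam) * (n : ℝ) * Real.log n)) :
    ∀ j : Fin k, j ≠ m →
      stepPr a (fun b =>
          (cnt b m : ℝ) - (cnt b j : ℝ) ≤ (sval c : ℝ) * (1 + lam / 6)) ≤ 1 / (n : ℝ) ^ 2 := by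
  intro j hj
  obtain rfl : cnt a = c := funext ha
  have : NeZero n := ⟨((lt_of_Mset_eq_singleton hM hj).trans_le (cnt_le a m)).ne_bot⟩
  have hn : (1 : ℝ) ≤ n := by exact_mod_cast NeZero.one_le
  have hn0 : (0 : ℝ) < n := by linarith
  have hlam : lam ≤ freq a m := by rwa [freq_eq_cnt_div, le_div_iff₀ hn0]
  have hgap : ∀ h ≠ m, freq a h + sval (cnt a) / n ≤ freq a m := fun h hh => by
    rw [freq_eq_cnt_div, freq_eq_cnt_div, ← add_div]
    gcongr
    exact_mod_cast add_sval_le_of_Mset_eq_singleton hM hh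
  refine (stepPr_gap_le_exp_of_bias a hgap (by positivity) ?_ hj ?_).trans
    (exp_neg_bias_le_one_div_sq hn hlam0 hlam hs)
  · rwa [freq_eq_cnt_div, div_le_iff₀ hn0]
  · rw [← mul_assoc, mul_div_cancel₀ _ hn0.ne']
    gcongr
end

section
/- (Very-large majority, second bound.) There exists n₀ such that for all n ≥ n₀ the following holds. Let c̄ be a k-cd for n nodes with s(c̄) ≥ n/3, attained with majority color m ∈ M(c̄). If n − c_m < n^{1/4}·log n, then Pr[ C̄_{m,t+1} > 0 | C_t = c̄ ] ≤ n^{−1/5}, where C̄_{m,t+1} = n − C_{m,t+1}. -/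
open Finset

/-!
A node adopts a color other than `m` only if at least two of its three samples have a color other
than `m`. If `q` nodes have such a color, this happens with probability at most `3 (q / n)²`, so by
a union bound over the `n` nodes the minority survives with probability at most `3 q² / n`. For
`q < n ^ (1/4) log n` this is `O(n ^ (-1/2) log² n)`, which is `o(n ^ (-1/5))`.
-/

section Density

variable {ι α β : Type*} [Fintype ι] [Fintype α] [Fintype β]

lemma dens_product (s : Finset α) (t : Finset β) : (s ×ˢ t).dens = s.dens * t.dens := by
  simp only [dens_eq_card_div_card, card_product, Fintype.card_prod, Nat.cast_mul,
    mul_div_mul_comm]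

variable [DecidableEq ι] [DecidableEq α]

lemma dens_filter_apply_mem (s : Finset α) (i : ι) :
    dens ({f | f i ∈ s} : Finset (ι → α)) = dens s := by
  have dens_split : dens ({f | f i ∈ s} : Finset (ι → α)) =
      dens (s ×ˢ (univ : Finset ({j // j ≠ i} → α))) := by
    rw [← dens_map_equiv (Equiv.funSplitAt i α)]
    congr 1
    ext p
    simp [mem_map_equiv, Equiv.funSplitAt, Equiv.piSplitAt]
  obtain _ | _ := isEmpty_or_nonempty α
  · rw [dens_split, Subsingleton.elim s ∅, empty_product, dens_empty, dens_empty]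
  · rw [dens_split, dens_product, dens_univ, mul_one]

lemma dens_filter_exists_apply_mem_le (s : Finset α) :
    dens ({f | ∃ i, f i ∈ s} : Finset (ι → α)) ≤ Fintype.card ι * dens s :=
  calc
    dens ({f | ∃ i, f i ∈ s} : Finset (ι → α))
        = dens (univ.biUnion fun i : ι => ({f | f i ∈ s} : Finset (ι → α))) := by
      congr 1
      ext f
      simp
    _ ≤ ∑ i : ι, dens ({f | f i ∈ s} : Finset (ι → α)) := dens_biUnion_le
    _ = Fintype.card ι * dens s := by
      simp only [dens_filter_apply_mem, sum_const, card_univ, nsmul_eq_mul]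

end Density

section Majority

variable {k : ℕ}

lemma two_ne_of_maj3_ne {x y z m : Fin k} (h : maj3 x y z ≠ m) :
    y ≠ m ∧ z ≠ m ∨ x ≠ m ∧ z ≠ m ∨ x ≠ m ∧ y ≠ m := by
  grind [maj3]

lemma dens_maj3_ne_le {α : Type*} [Fintype α] (a : α → Fin k) (m : Fin k) :
    dens ({p | maj3 (a p.1) (a p.2.1) (a p.2.2) ≠ m} : Finset (α × α × α)) ≤
      3 * dens ({x | a x ≠ m} : Finset α) ^ 2 := by
  classical
  set N : Finset α := {x | a x ≠ m}
  have cover : ({p | maj3 (a p.1) (a p.2.1) (a p.2.2) ≠ m} : Finset (α × α × α)) ⊆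
      univ ×ˢ N ×ˢ N ∪ (N ×ˢ univ ×ˢ N ∪ N ×ˢ N ×ˢ univ) := by
    rintro ⟨x, y, z⟩ h
    simpa [N] using two_ne_of_maj3_ne (mem_filter.mp h).2
  calc
    _ ≤ dens (univ ×ˢ N ×ˢ N) + (dens (N ×ˢ univ ×ˢ N) + dens (N ×ˢ N ×ˢ univ)) :=
      (dens_le_dens cover).trans ((dens_union_le _ _).trans (by gcongr; exact dens_union_le _ _))
    _ = 3 * (dens (univ : Finset α) * dens N ^ 2) := by
      simp only [dens_product]
      ring
    _ ≤ 3 * dens N ^ 2 := by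
      gcongr
      exact mul_le_of_le_one_left' dens_le_one

end Majority

section Step

variable {n k : ℕ}

lemma stepPr_eq_dens (a : Fin n → Fin k) (E : (Fin n → Fin k) → Prop) [DecidablePred E] :
    stepPr a E = (dens ({S | E (stepA a S)} : Finset (Sample n)) : ℝ) := by
  rw [stepPr, nnratCast_dens, Nat.card_eq_fintype_card, Nat.card_eq_fintype_card,
    Fintype.card_subtype]

lemma sub_cnt_eq_card_ne (b : Fin n → Fin k) (m : Fin k) :
    (n : ℝ) - cnt b m = #{i | b i ≠ m} := by
  have h := card_filter_add_card_filter_not (s := (univ : Finset (Fin n))) (fun i => b i = m)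
  rw [card_univ, Fintype.card_fin] at h
  rw [sub_eq_iff_eq_add', cnt]
  exact_mod_cast h.symm

lemma sub_cnt_pos_iff {b : Fin n → Fin k} {m : Fin k} :
    (n : ℝ) - cnt b m > 0 ↔ ∃ i, b i ≠ m := by
  simp [sub_cnt_eq_card_ne, card_pos, Finset.Nonempty]

lemma stepPr_minority_pos_le (a : Fin n → Fin k) (m : Fin k) :
    stepPr a (fun b => (n : ℝ) - cnt b m > 0) ≤ 3 * ((n : ℝ) - cnt a m) ^ 2 / n := by
  set B : Finset (Fin n × Fin n × Fin n) := {p | maj3 (a p.1) (a p.2.1) (a p.2.2) ≠ m}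
  have mem_B (S : Sample n) (i : Fin n) : stepA a S i ≠ m ↔ S i ∈ B := by
    simp [B, stepA]
  have union_bound : dens ({S | ∃ i, stepA a S i ≠ m} : Finset (Sample n)) ≤
      n * (3 * dens ({i | a i ≠ m} : Finset (Fin n)) ^ 2) :=
    calc
      _ = dens ({S | ∃ i, S i ∈ B} : Finset (Sample n)) := by
        simp only [mem_B]
      _ ≤ n * dens B := by
        convert dens_filter_exists_apply_mem_le B
        exact (Fintype.card_fin n).symm
      _ ≤ _ := by gcongr; exact dens_maj3_ne_le a m
  calc
    _ = (dens ({S | ∃ i, stepA a S i ≠ m} : Finset (Sample n)) : ℝ) := by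
      simp only [sub_cnt_pos_iff, stepPr_eq_dens]
    _ ≤ n * (3 * (dens ({i | a i ≠ m} : Finset (Fin n)) : ℝ) ^ 2) := by
      exact_mod_cast union_bound
    _ = 3 * ((n : ℝ) - cnt a m) ^ 2 / n := by
      rw [nnratCast_dens, Fintype.card_fin, sub_cnt_eq_card_ne]
      field_simp

end Step

section Asymptotic

open Filter Asymptotics

lemma isLittleO_rpow_mul_log_rpow {s t : ℝ} (r : ℝ) (hst : s < t) :
    (fun x : ℝ => x ^ s * Real.log x ^ r) =o[atTop] fun x => x ^ t := by
  refine ((isBigO_refl (fun x : ℝ => x ^ s) atTop).mul_isLittleO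
    (isLittleO_log_rpow_rpow_atTop r (sub_pos.mpr hst))).congr' .rfl ?_
  filter_upwards [eventually_gt_atTop 0] with x hx
  rw [← Real.rpow_add hx, add_sub_cancel]

lemma eventually_mul_sq_rpow_mul_log_div_le {s t : ℝ} (C : ℝ) (hst : 2 * s - 1 < t) :
    ∀ᶠ x : ℝ in atTop, C * (x ^ s * Real.log x) ^ 2 / x ≤ x ^ t := by
  filter_upwards [((isLittleO_rpow_mul_log_rpow 2 hst).const_mul_left C).eventuallyLE,
    eventually_gt_atTop 0] with x hle hx
  calc
    C * (x ^ s * Real.log x) ^ 2 / x = C * (x ^ (2 * s - 1) * Real.log x ^ (2 : ℝ)) := by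
      rw [Real.rpow_sub_one hx.ne', mul_comm 2 s, Real.rpow_mul hx.le, Real.rpow_two,
        Real.rpow_two]
      ring
    _ ≤ ‖x ^ t‖ := (Real.le_norm_self _).trans hle
    _ = x ^ t := Real.norm_of_nonneg (Real.rpow_nonneg hx.le t)

end Asymptotic

/-- Lemma (very-large majority), second bound: for all sufficiently large `n`, if
`s(c̄) ≥ n/3` with majority color `m` and `n − c_m < n^{1/4}·log n`, then
`Pr[C̄_{m,t+1} > 0 | C_t = c̄] ≤ n^{−1/5}`. -/
theorem minority_vanishes : ∃ n₀ : ℕ, ∀ n : ℕ, n₀ ≤ n → ∀ k : ℕ, ∀ c : Fin k → ℕ,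
    (∑ h, c h = n) → ∀ a : Fin n → Fin k, (∀ h, cnt a h = c h) →
    ∀ m : Fin k, m ∈ Mset c → (sval c : ℝ) ≥ (n : ℝ) / 3 →
    ((n : ℝ) - (c m : ℝ) < (n : ℝ) ^ ((1 : ℝ) / 4) * Real.log n) →
    stepPr a (fun b => (n : ℝ) - (cnt b m : ℝ) > 0) ≤ (n : ℝ) ^ (-(1 : ℝ) / 5) := by
  have asymptotic : ∀ᶠ n : ℕ in Filter.atTop,
      3 * ((n : ℝ) ^ ((1 : ℝ) / 4) * Real.log n) ^ 2 / n ≤ (n : ℝ) ^ (-(1 : ℝ) / 5) :=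
    tendsto_natCast_atTop_atTop.eventually
      (eventually_mul_sq_rpow_mul_log_div_le 3 (by norm_num))
  obtain ⟨n₀, hn₀⟩ := Filter.eventually_atTop.mp asymptotic
  refine ⟨n₀, fun n hn k c _ a hac m _ _ hsmall => ?_⟩
  rw [← hac m] at hsmall
  have minority_nonneg : 0 ≤ (n : ℝ) - cnt a m := by
    rw [sub_cnt_eq_card_ne]
    positivity
  calc
    _ ≤ 3 * ((n : ℝ) - cnt a m) ^ 2 / n := stepPr_minority_pos_le a m
    _ ≤ 3 * ((n : ℝ) ^ ((1 : ℝ) / 4) * Real.log n) ^ 2 / n := by gcongr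
    _ ≤ (n : ℝ) ^ (-(1 : ℝ) / 5) := hn₀ n hn
end
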